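/- arXiv:2404.01610 — 10 statements merged into one kernel-verified Lean document; each statement's English description precedes it below -/
import Mathlib

section
/- (Moser–Trudinger inequality) For every β > 0 there exists a constant C > 0, depending only on β and (V, μ, W), such that every v : V → ℝ with ∫_V v dμ = 0 and ∫_V |∇v|² dμ ≤ 1 satisfies ∫_V e^{β v²} dμ ≤ C. -/
open Real Finset

variable {V : Type*}

/-- Discrete integral: `∫_V f dμ = Σ_x μ(x) f(x)`. -/
noncomputable def intV [Fintype V] (μ f : V → ℝ) : ℝ := ∑ x, μ x * f x

/-- Volume `|V| = Σ_x μ(x)`. -/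
noncomputable def volV [Fintype V] (μ : V → ℝ) : ℝ := ∑ x, μ x

/-- The nonlocal (fractional graph Laplacian type) operator
`Lu(x) = (1/μ(x)) Σ_{y ≠ x} W(x,y)(u(x) − u(y))`. -/
noncomputable def opL [Fintype V] [DecidableEq V] (μ : V → ℝ) (W : V → V → ℝ)
    (u : V → ℝ) (x : V) : ℝ :=
  (1 / μ x) * ∑ y ∈ univ.filter (fun y => y ≠ x), W x y * (u x - u y)

/-- Gradient form `∇u·∇v(x) = (1/(2μ(x))) Σ_{y ≠ x} W(x,y)(u(x)−u(y))(v(x)−v(y))`. -/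
noncomputable def gradForm [Fintype V] [DecidableEq V] (μ : V → ℝ) (W : V → V → ℝ)
    (u v : V → ℝ) (x : V) : ℝ :=
  (1 / (2 * μ x)) * ∑ y ∈ univ.filter (fun y => y ≠ x), W x y * (u x - u y) * (v x - v y)

/-- `|∇u|²(x) = ∇u·∇u(x)`. -/
noncomputable def gradSq [Fintype V] [DecidableEq V] (μ : V → ℝ) (W : V → V → ℝ)
    (u : V → ℝ) (x : V) : ℝ := gradForm μ W u u x


/-- (Moser–Trudinger inequality) For every `β > 0` there is `C > 0` such that every `v` with
mean zero and `∫_V |∇v|² dμ ≤ 1` satisfies `∫_V e^{β v²} dμ ≤ C`. -/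
theorem moser_trudinger [Fintype V] [Nonempty V] [DecidableEq V]
    (μ : V → ℝ) (W : V → V → ℝ)
    (hμ : ∀ x, 0 < μ x)
    (hWsym : ∀ x y, W x y = W y x)
    (hWpos : ∀ x y, x ≠ y → 0 < W x y)
    (β : ℝ) (hβ : 0 < β) :
    ∃ C : ℝ, 0 < C ∧ ∀ v : V → ℝ, intV μ v = 0 → intV μ (gradSq μ W v) ≤ 1 →
      intV μ (fun x => Real.exp (β * (v x) ^ 2)) ≤ C := by
  set D : ℝ := ∑ x, ∑ y, |2 / W x y| with hD
  have hDle : ∀ x y, |2 / W x y| ≤ D := by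
    intro x y
    have h1 : |2 / W x y| ≤ ∑ y, |2 / W x y| :=
      Finset.single_le_sum (f := fun y => |2 / W x y|) (fun i _ => abs_nonneg _) (mem_univ y)
    have h2 : ∑ y, |2 / W x y| ≤ D :=
      Finset.single_le_sum (f := fun x => ∑ y, |2 / W x y|)
        (fun i _ => Finset.sum_nonneg (fun j _ => abs_nonneg _)) (mem_univ x)
    exact h1.trans h2
  refine ⟨∑ x, μ x * Real.exp (β * D),
    Finset.sum_pos (fun x _ => mul_pos (hμ x) (Real.exp_pos _)) univ_nonempty, ?_⟩
  intro v hv hg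
  unfold intV at hv hg ⊢
  refine Finset.sum_le_sum (fun x _ => mul_le_mul_of_nonneg_left ?_ (hμ x).le)
  refine Real.exp_le_exp.mpr (mul_le_mul_of_nonneg_left ?_ hβ.le)
  have hterm : ∀ x, μ x * gradSq μ W v x =
      (1 / 2) * ∑ y ∈ univ.filter (fun y => y ≠ x), W x y * (v x - v y) * (v x - v y) := by
    intro x
    have := (hμ x).ne'
    unfold gradSq gradForm
    field_simp
  have hnn : ∀ x, ∀ y ∈ univ.filter (fun y => y ≠ x),
      0 ≤ W x y * (v x - v y) * (v x - v y) := by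
    intro x y hy
    have hne : y ≠ x := by simpa using hy
    rw [mul_assoc]
    exact mul_nonneg (hWpos x y hne.symm).le (mul_self_nonneg _)
  have hpair : ∀ y, y ≠ x → (v x - v y) ^ 2 ≤ D := by
    intro y hy
    have h1 := Finset.single_le_sum (hnn x) (show y ∈ univ.filter (fun y => y ≠ x) by simpa using hy)
    have h2 : μ x * gradSq μ W v x ≤ ∑ x, μ x * gradSq μ W v x :=
      Finset.single_le_sum (f := fun x => μ x * gradSq μ W v x)
        (fun i _ => by
          rw [hterm i]
          exact mul_nonneg (by norm_num) (Finset.sum_nonneg (hnn i))) (mem_univ x)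
    rw [hterm x] at h2
    have hw := hWpos x y hy.symm
    have h3 : (v x - v y) ^ 2 ≤ 2 / W x y := by
      rw [le_div_iff₀ hw]
      nlinarith
    exact h3.trans ((le_abs_self _).trans (hDle x y))
  obtain ⟨y, hy⟩ : ∃ y, v x * v y ≤ 0 := by
    by_contra! hcon
    have h1 : 0 < ∑ y, μ y * (v x * v y) :=
      Finset.sum_pos (fun y _ => mul_pos (hμ y) (hcon y)) univ_nonempty
    have h2 : ∑ y, μ y * (v x * v y) = v x * ∑ y, μ y * v y := by
      rw [Finset.mul_sum]
      exact Finset.sum_congr rfl (fun y _ => by ring)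
    rw [h2, hv, mul_zero] at h1
    exact lt_irrefl _ h1
  by_cases hyx : y = x
  · subst hyx
    have := (abs_nonneg _).trans (hDle y y)
    nlinarith
  · have := hpair y hyx
    nlinarith [sq_nonneg (v y)]
end

section
/- Let h : V → ℝ be a positive function. Then there exist constants C₁ > 0 and C₂ < 0, depending only on (V, μ, W) and h, such that every u : V → ℝ with ∫_V u dμ = 0 satisfies ∫_V h e^u dμ ≥ C₁ e^{C₂ ‖∇u‖₂}, where ‖∇u‖₂ = (∫_V |∇u|² dμ)^{1/2}. -/
open Real Finset

variable {V : Type*}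

/-- For positive `h` there exist `C₁ > 0`, `C₂ < 0` such that every mean-zero `u` satisfies
`∫_V h e^u dμ ≥ C₁ e^{C₂ ‖∇u‖₂}`. -/
theorem lower_bound_h_exp [Fintype V] [Nonempty V] [DecidableEq V]
    (μ : V → ℝ) (W : V → V → ℝ)
    (hμ : ∀ x, 0 < μ x)
    (hWsym : ∀ x y, W x y = W y x)
    (hWpos : ∀ x y, x ≠ y → 0 < W x y)
    (h : V → ℝ) (hh : ∀ x, 0 < h x) :
    ∃ C₁ C₂ : ℝ, 0 < C₁ ∧ C₂ < 0 ∧ ∀ u : V → ℝ, intV μ u = 0 →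
      C₁ * Real.exp (C₂ * Real.sqrt (intV μ (gradSq μ W u))) ≤
        intV μ (fun x => h x * Real.exp (u x)) := by
  obtain ⟨x₀, hx₀⟩ := Finite.exists_min (fun x => μ x * h x)
  refine ⟨μ x₀ * h x₀, -1, mul_pos (hμ _) (hh _), by norm_num, fun u hu => ?_⟩
  -- a mean-zero function is nonnegative somewhere
  obtain ⟨x, hx⟩ : ∃ x, 0 ≤ u x := by
    by_contra hneg
    have hneg' : ∀ x, u x < 0 := fun x => lt_of_not_ge fun hx => hneg ⟨x, hx⟩
    have hlt : intV μ u < 0 :=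
      Finset.sum_neg (fun x _ => mul_neg_of_pos_of_neg (hμ x) (hneg' x)) Finset.univ_nonempty
    exact absurd hu hlt.ne
  have h1 : Real.exp (-1 * Real.sqrt (intV μ (gradSq μ W u))) ≤ 1 := by
    rw [Real.exp_le_one_iff]
    have := Real.sqrt_nonneg (intV μ (gradSq μ W u))
    linarith
  have h2 : μ x * (h x * Real.exp (u x)) ≤ intV μ (fun x => h x * Real.exp (u x)) :=
    Finset.single_le_sum (f := fun x => μ x * (h x * Real.exp (u x)))
      (fun y _ => (mul_pos (hμ y) (mul_pos (hh y) (Real.exp_pos _))).le) (Finset.mem_univ x)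
  calc μ x₀ * h x₀ * Real.exp (-1 * Real.sqrt (intV μ (gradSq μ W u)))
      ≤ μ x₀ * h x₀ := mul_le_of_le_one_right (mul_pos (hμ _) (hh _)).le h1
    _ ≤ μ x * h x := hx₀ x
    _ ≤ μ x * h x * Real.exp (u x) :=
        le_mul_of_one_le_right (mul_pos (hμ _) (hh _)).le (Real.one_le_exp hx)
    _ = μ x * (h x * Real.exp (u x)) := mul_assoc _ _ _
    _ ≤ _ := h2
end

section
/- Let h : V → ℝ be positive and ρ ∈ ℝ with ρ ≠ 0. Then there exists a constant C, depending only on (V, μ, W), h and ρ, such that every u : V → ℝ with ∫_V u dμ = 0 satisfies J_ρ(u) ≥ (1/4)∫_V |∇u|² dμ − C. In particular J_ρ is bounded from below on {u : ∫_V u dμ = 0}. -/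
open Real Finset

variable {V : Type*}

/-- The mean field functional `J_ρ(u) = (1/2) ∫_V |∇u|² dμ − ρ log ∫_V h e^u dμ`. -/
noncomputable def Jrho [Fintype V] [DecidableEq V] (μ : V → ℝ) (W : V → V → ℝ)
    (h : V → ℝ) (ρ : ℝ) (u : V → ℝ) : ℝ :=
  (1 / 2) * intV μ (gradSq μ W u) - ρ * Real.log (intV μ (fun x => h x * Real.exp (u x)))

/-- For positive `h` and `ρ ≠ 0` there is `C` with `J_ρ(u) ≥ (1/4) ∫_V |∇u|² dμ − C` for every
mean-zero `u`; in particular `J_ρ` is bounded below on the mean-zero subspace. -/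
theorem Jrho_lower_bound [Fintype V] [Nonempty V] [DecidableEq V]
    (μ : V → ℝ) (W : V → V → ℝ)
    (hμ : ∀ x, 0 < μ x)
    (hWsym : ∀ x y, W x y = W y x)
    (hWpos : ∀ x y, x ≠ y → 0 < W x y)
    (h : V → ℝ) (hh : ∀ x, 0 < h x)
    (ρ : ℝ) (hρ : ρ ≠ 0) :
    (∃ C : ℝ, ∀ u : V → ℝ, intV μ u = 0 →
      (1 / 4) * intV μ (gradSq μ W u) - C ≤ Jrho μ W h ρ u) ∧
    (∃ m : ℝ, ∀ u : V → ℝ, intV μ u = 0 → m ≤ Jrho μ W h ρ u) := by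
  have hgs : ∀ u : V → ℝ, ∀ x, 0 ≤ μ x * gradSq μ W u x := by
    intro u x
    unfold gradSq gradForm
    have := hμ x
    refine mul_nonneg this.le (mul_nonneg (by positivity) (Finset.sum_nonneg ?_))
    intro y hy
    have hy' : y ≠ x := by simpa using hy
    have := hWpos x y hy'.symm
    nlinarith [mul_nonneg this.le (mul_self_nonneg (u x - u y))]
  have hE0 : ∀ u : V → ℝ, 0 ≤ intV μ (gradSq μ W u) := fun u =>
    Finset.sum_nonneg fun x _ => hgs u x
  have hpair : ∀ u : V → ℝ, ∀ x y, x ≠ y →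
      (1 / 2) * (W x y * (u x - u y) ^ 2) ≤ intV μ (gradSq μ W u) := by
    intro u x y hxy
    have h1 : μ x * gradSq μ W u x ≤ intV μ (gradSq μ W u) :=
      Finset.single_le_sum (f := fun x => μ x * gradSq μ W u x)
        (fun i _ => hgs u i) (Finset.mem_univ x)
    have h2 : W x y * (u x - u y) * (u x - u y) ≤
        ∑ z ∈ univ.filter (fun z => z ≠ x), W x z * (u x - u z) * (u x - u z) := by
      refine Finset.single_le_sum (f := fun z => W x z * (u x - u z) * (u x - u z)) ?_ ?_
      · intro z hz
        have hz' : z ≠ x := by simpa using hz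
        have := hWpos x z hz'.symm
        nlinarith [mul_nonneg this.le (mul_self_nonneg (u x - u z))]
      · simpa using hxy.symm
    have h3 : μ x * gradSq μ W u x = (1 / 2) *
        ∑ z ∈ univ.filter (fun z => z ≠ x), W x z * (u x - u z) * (u x - u z) := by
      unfold gradSq gradForm
      have := (hμ x).ne'
      field_simp
    nlinarith
  obtain ⟨K, hK, hKb⟩ : ∃ K : ℝ, 0 < K ∧ ∀ u : V → ℝ, ∀ x y,
      (u x - u y) ^ 2 ≤ K * intV μ (gradSq μ W u) := by
    have hn : ∀ p : V × V, 0 ≤ (if p.1 = p.2 then (0 : ℝ) else 2 / W p.1 p.2) := by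
      intro p
      split_ifs with hp
      · exact le_rfl
      · have := hWpos _ _ hp
        positivity
    refine ⟨1 + ∑ p : V × V, (if p.1 = p.2 then (0 : ℝ) else 2 / W p.1 p.2), ?_, ?_⟩
    · have := Finset.sum_nonneg (s := Finset.univ) (fun p _ => hn p)
      linarith
    · intro u x y
      have hs := Finset.single_le_sum (fun p _ => hn p) (Finset.mem_univ (x, y))
      have hs0 := Finset.sum_nonneg (s := Finset.univ) (fun p _ => hn p)
      have hE := hE0 u
      by_cases hxy : x = y
      · subst hxy
        rw [sub_self]
        nlinarith
      · have hW := hWpos x y hxy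
        have hp := hpair u x y hxy
        simp only [hxy, if_false] at hs
        have h4 : (u x - u y) ^ 2 ≤ 2 / W x y * intV μ (gradSq μ W u) := by
          rw [div_mul_eq_mul_div, le_div_iff₀ hW]
          linarith
        refine h4.trans (mul_le_mul_of_nonneg_right ?_ hE)
        linarith
  have hApos : 0 < intV μ h :=
    Finset.sum_pos (fun x _ => mul_pos (hμ x) (hh x)) Finset.univ_nonempty
  have main : ∀ u : V → ℝ, intV μ u = 0 →
      (1 / 4) * intV μ (gradSq μ W u) - (|ρ| * |Real.log (intV μ h)| + K * ρ ^ 2)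
        ≤ Jrho μ W h ρ u := by
    intro u hu
    obtain ⟨x0, hx0⟩ : ∃ x, u x ≤ 0 := by
      by_contra! hc
      have : 0 < intV μ u :=
        Finset.sum_pos (fun x _ => mul_pos (hμ x) (hc x)) Finset.univ_nonempty
      linarith
    obtain ⟨x1, hx1⟩ : ∃ x, 0 ≤ u x := by
      by_contra! hc
      have : intV μ u < 0 :=
        Finset.sum_neg (fun x _ => mul_neg_of_pos_of_neg (hμ x) (hc x)) Finset.univ_nonempty
      linarith
    have hE := hE0 u
    set E := intV μ (gradSq μ W u) with hEdef
    set S := Real.sqrt (K * E) with hS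
    have hS2 : S ^ 2 = K * E := Real.sq_sqrt (by positivity)
    have hd : ∀ x y, u x - u y ≤ S := fun x y => Real.le_sqrt_of_sq_le (hKb u x y)
    have hup : ∀ x, u x ≤ S := fun x => by linarith [hd x x0]
    have hlo : ∀ x, -S ≤ u x := fun x => by linarith [hd x1 x]
    have hI1 : intV μ (fun x => h x * Real.exp (u x)) ≤ intV μ h * Real.exp S := by
      unfold intV
      rw [Finset.sum_mul]
      refine Finset.sum_le_sum fun x _ => ?_
      rw [← mul_assoc]
      exact mul_le_mul_of_nonneg_left (Real.exp_le_exp.2 (hup x)) (mul_pos (hμ x) (hh x)).le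
    have hI2 : intV μ h * Real.exp (-S) ≤ intV μ (fun x => h x * Real.exp (u x)) := by
      unfold intV
      rw [Finset.sum_mul]
      refine Finset.sum_le_sum fun x _ => ?_
      rw [← mul_assoc]
      exact mul_le_mul_of_nonneg_left (Real.exp_le_exp.2 (hlo x)) (mul_pos (hμ x) (hh x)).le
    have hp2 : 0 < intV μ h * Real.exp (-S) := mul_pos hApos (Real.exp_pos _)
    have hL1 := Real.log_le_log (hp2.trans_le hI2) hI1
    have hL2 := Real.log_le_log hp2 hI2
    rw [Real.log_mul hApos.ne' (Real.exp_pos _).ne', Real.log_exp] at hL1 hL2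
    unfold Jrho
    rw [← hEdef]
    set L := Real.log (intV μ (fun x => h x * Real.exp (u x)))
    have hLabs : |L| ≤ |Real.log (intV μ h)| + S := by
      rw [abs_le]
      constructor
      · linarith [neg_abs_le (Real.log (intV μ h))]
      · linarith [le_abs_self (Real.log (intV μ h))]
    have h5 : ρ * L ≤ |ρ| * (|Real.log (intV μ h)| + S) :=
      (le_abs_self _).trans (by
        rw [abs_mul]
        exact mul_le_mul_of_nonneg_left hLabs (abs_nonneg _))
    have h6 : |ρ| * S ≤ (1 / 4) * E + K * ρ ^ 2 := by
      have h7 : K * (|ρ| * S) ≤ K * ((1 / 4) * E + K * ρ ^ 2) := by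
        rw [← sq_abs ρ]
        nlinarith [sq_nonneg (S / 2 - K * |ρ|)]
      exact le_of_mul_le_mul_left h7 hK
    linarith
  exact ⟨⟨_, main⟩, ⟨-(|ρ| * |Real.log (intV μ h)| + K * ρ ^ 2), fun u hu => by
    linarith [main u hu, hE0 u]⟩⟩
end

section
/- Let h : V → ℝ be positive and ρ ∈ ℝ with ρ ≠ 0. Then J_ρ attains its infimum over H = {u : V → ℝ : ∫_V u dμ = 0} at some u ∈ H, and this minimizer u solves the fractional mean field equation Lu(x) = ρ( h(x)e^{u(x)} / ∫_V h e^u dμ − 1/|V| ) for every x ∈ V. -/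
open Real Finset

variable {V : Type*}

lemma aux_J [Fintype V] [DecidableEq V] (μ : V → ℝ) (W : V → V → ℝ) (hμ : ∀ x, 0 < μ x)
    (h : V → ℝ) (ρ : ℝ) (u : V → ℝ) :
    Jrho μ W h ρ u = (1 / 4) * ∑ x, ∑ y, W x y * (u x - u y) ^ 2
      - ρ * Real.log (∑ x, μ x * (h x * Real.exp (u x))) := by
  have h1 : intV μ (gradSq μ W u) = (1 / 2) * ∑ x, ∑ y, W x y * (u x - u y) ^ 2 := by
    unfold intV gradSq gradForm
    rw [Finset.mul_sum]
    refine Finset.sum_congr rfl fun x _ => ?_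
    have hx := (hμ x).ne'
    rw [Finset.sum_filter_of_ne]
    · rw [show (∑ y, W x y * (u x - u y) * (u x - u y)) = ∑ y, W x y * (u x - u y) ^ 2 from
        Finset.sum_congr rfl fun y _ => by ring]
      field_simp
    · rintro y _ hy rfl
      simp at hy
  rw [Jrho, h1]
  unfold intV
  ring

lemma aux_L [Fintype V] [DecidableEq V] (μ : V → ℝ) (W : V → V → ℝ) (hμ : ∀ x, 0 < μ x)
    (u : V → ℝ) (x : V) : μ x * opL μ W u x = ∑ y, W x y * (u x - u y) := by
  have hx := (hμ x).ne'
  unfold opL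
  rw [Finset.sum_filter_of_ne]
  · field_simp
  · rintro y _ hy rfl
    simp at hy

lemma aux_sym [Fintype V] (W : V → V → ℝ) (hWsym : ∀ x y, W x y = W y x) (u v : V → ℝ) :
    ∑ x, ∑ y, W x y * (u x - u y) * (v x - v y) = 2 * ∑ x, (∑ y, W x y * (u x - u y)) * v x := by
  have h1 : ∑ x, ∑ y, W x y * (u x - u y) * v y = - ∑ x, ∑ y, W x y * (u x - u y) * v x := by
    rw [Finset.sum_comm, ← Finset.sum_neg_distrib]
    refine Finset.sum_congr rfl fun x _ => ?_
    rw [← Finset.sum_neg_distrib]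
    refine Finset.sum_congr rfl fun y _ => ?_
    rw [hWsym y x]; ring
  simp_rw [mul_sub (W _ _ * _), Finset.sum_sub_distrib, Finset.sum_mul]
  rw [h1]; ring

lemma aux_coer [Fintype V] [Nonempty V] [DecidableEq V] (μ : V → ℝ) (W : V → V → ℝ)
    (hμ : ∀ x, 0 < μ x) (hWpos : ∀ x y, x ≠ y → 0 < W x y) :
    ∃ c > 0, ∀ u : V → ℝ, intV μ u = 0 →
      c * ‖u‖ ^ 2 ≤ (1 / 4) * ∑ x, ∑ y, W x y * (u x - u y) ^ 2 := by
  obtain ⟨c, hc, hcW⟩ : ∃ c > 0, ∀ x y, x ≠ y → c ≤ W x y := by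
    obtain ⟨p, hp⟩ := Finite.exists_min (fun p : V × V => if p.1 = p.2 then (1:ℝ) else 0)
    let f : V × V → ℝ := fun p => if p.1 = p.2 then 1 else W p.1 p.2
    obtain ⟨p, hp⟩ := Finite.exists_min f
    refine ⟨f p, ?_, fun x y hxy => ?_⟩
    · simp only [f]; split_ifs with hq
      · norm_num
      · exact hWpos _ _ hq
    · simpa [f, hxy] using hp (x, y)
  refine ⟨c / 4, by positivity, fun u hu => ?_⟩
  obtain ⟨x, hx⟩ := Finite.exists_max (fun x => |u x|)
  have hn : ‖u‖ = |u x| := by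
    apply le_antisymm
    · exact (pi_norm_le_iff_of_nonneg (abs_nonneg _)).2 hx
    · exact norm_le_pi_norm u x
  have hterm : ∀ a b, 0 ≤ W a b * (u a - u b) ^ 2 := by
    intro a b
    by_cases hab : a = b
    · subst hab; simp
    · exact mul_nonneg (hWpos a b hab).le (sq_nonneg _)
  obtain ⟨y, hy⟩ : ∃ y, u x * u y ≤ 0 := by
    by_contra! hcon
    have : 0 < ∑ y, μ y * (u x * u y) :=
      Finset.sum_pos (fun y _ => mul_pos (hμ y) (hcon y)) Finset.univ_nonempty
    have h2 : ∑ y, μ y * (u x * u y) = u x * intV μ u := by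
      unfold intV
      rw [Finset.mul_sum]
      exact Finset.sum_congr rfl fun y _ => by ring
    rw [h2, hu] at this
    simp at this
  have h1 : W x y * (u x - u y) ^ 2 ≤ ∑ x, ∑ y, W x y * (u x - u y) ^ 2 :=
    (Finset.single_le_sum (f := fun y => W x y * (u x - u y) ^ 2)
      (fun b _ => hterm x b) (Finset.mem_univ y)).trans
    (Finset.single_le_sum (f := fun x => ∑ y, W x y * (u x - u y) ^ 2)
      (fun a _ => Finset.sum_nonneg fun b _ => hterm a b) (Finset.mem_univ x))
  have h2 : c * u x ^ 2 ≤ W x y * (u x - u y) ^ 2 := by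
    by_cases hxy : x = y
    · subst hxy
      have : u x ^ 2 = 0 := le_antisymm (by nlinarith) (sq_nonneg _)
      simp [this]
    · exact mul_le_mul (hcW x y hxy) (by nlinarith [sq_nonneg (u y)]) (sq_nonneg _)
        (hWpos x y hxy).le
  rw [hn, sq_abs]
  linarith

lemma aux_log [Fintype V] [Nonempty V] (μ h : V → ℝ) (hμ : ∀ x, 0 < μ x) (hh : ∀ x, 0 < h x)
    (u : V → ℝ) : |Real.log (∑ x, μ x * (h x * Real.exp (u x)))| ≤
      |Real.log (∑ x, μ x * h x)| + ‖u‖ := by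
  have hA : 0 < ∑ x, μ x * h x :=
    Finset.sum_pos (fun x _ => mul_pos (hμ x) (hh x)) Finset.univ_nonempty
  have hZ : 0 < ∑ x, μ x * (h x * Real.exp (u x)) :=
    Finset.sum_pos (fun x _ => mul_pos (hμ x) (mul_pos (hh x) (Real.exp_pos _)))
      Finset.univ_nonempty
  have hb : ∀ x, |u x| ≤ ‖u‖ := fun x => norm_le_pi_norm u x
  have h1 : ∑ x, μ x * (h x * Real.exp (u x)) ≤ (∑ x, μ x * h x) * Real.exp ‖u‖ := by
    rw [Finset.sum_mul]
    refine Finset.sum_le_sum fun x _ => ?_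
    rw [← mul_assoc]
    exact mul_le_mul_of_nonneg_left (Real.exp_le_exp.2 (abs_le.1 (hb x)).2)
      (mul_pos (hμ x) (hh x)).le
  have h2 : (∑ x, μ x * h x) * Real.exp (-‖u‖) ≤ ∑ x, μ x * (h x * Real.exp (u x)) := by
    rw [Finset.sum_mul]
    refine Finset.sum_le_sum fun x _ => ?_
    rw [← mul_assoc]
    exact mul_le_mul_of_nonneg_left (Real.exp_le_exp.2 (abs_le.1 (hb x)).1)
      (mul_pos (hμ x) (hh x)).le
  have h3 := Real.log_le_log hZ h1
  have h4 := Real.log_le_log (mul_pos hA (Real.exp_pos _)) h2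
  rw [Real.log_mul hA.ne' (Real.exp_pos _).ne', Real.log_exp] at h3 h4
  have h5 := abs_le.1 (le_refl |Real.log (∑ x, μ x * h x)|)
  rw [abs_le]
  constructor <;> linarith [h5.1, h5.2]

lemma aux_exists [Fintype V] [Nonempty V] [DecidableEq V]
    (μ : V → ℝ) (W : V → V → ℝ) (hμ : ∀ x, 0 < μ x)
    (hWpos : ∀ x y, x ≠ y → 0 < W x y) (h : V → ℝ) (hh : ∀ x, 0 < h x) (ρ : ℝ) :
    ∃ u : V → ℝ, intV μ u = 0 ∧
      ∀ w : V → ℝ, intV μ w = 0 → Jrho μ W h ρ u ≤ Jrho μ W h ρ w := by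
  obtain ⟨c, hc, hcoer⟩ := aux_coer μ W hμ hWpos
  set B := |Real.log (∑ x, μ x * h x)| with hB
  have hB0 : 0 ≤ B := abs_nonneg _
  have hcont : Continuous (Jrho μ W h ρ) := by
    have : Jrho μ W h ρ = fun u => (1 / 4) * ∑ x, ∑ y, W x y * (u x - u y) ^ 2
      - ρ * Real.log (∑ x, μ x * (h x * Real.exp (u x))) := funext fun u => aux_J μ W hμ h ρ u
    rw [this]
    have hl : Continuous fun u : V → ℝ => Real.log (∑ x, μ x * (h x * Real.exp (u x))) := by
      refine Continuous.log (by fun_prop) fun u => ?_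
      exact (Finset.sum_pos (fun x _ => mul_pos (hμ x) (mul_pos (hh x) (Real.exp_pos _)))
        Finset.univ_nonempty).ne'
    fun_prop
  have hHc : IsClosed {u : V → ℝ | intV μ u = 0} := by
    refine isClosed_eq ?_ continuous_const
    unfold intV
    fun_prop
  set R := 1 + (|ρ| + 2 * (|ρ| * B)) / c with hR
  have hρB : 0 ≤ |ρ| * B := by positivity
  have hR1 : 1 ≤ R := by
    have : 0 ≤ (|ρ| + 2 * (|ρ| * B)) / c := by positivity
    linarith
  have hcR : |ρ| + 2 * (|ρ| * B) ≤ c * R := by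
    rw [hR]; field_simp; linarith
  have hJ0 : Jrho μ W h ρ 0 ≤ |ρ| * B := by
    rw [aux_J μ W hμ]
    simp only [Pi.zero_apply, Real.exp_zero, mul_one, sub_self]
    rw [hB, ← abs_mul]
    simpa using neg_le_abs (ρ * Real.log (∑ x, μ x * h x))
  have h00 : intV μ (0 : V → ℝ) = 0 := by simp [intV]
  have hK : IsCompact (Metric.closedBall (0 : V → ℝ) R ∩ {u : V → ℝ | intV μ u = 0}) :=
    (isCompact_closedBall _ _).inter_right hHc
  have h0K : (0 : V → ℝ) ∈ Metric.closedBall (0 : V → ℝ) R ∩ {u : V → ℝ | intV μ u = 0} :=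
    ⟨Metric.mem_closedBall_self (by linarith), h00⟩
  obtain ⟨u, huK, hu⟩ := hK.exists_isMinOn ⟨0, h0K⟩ hcont.continuousOn
  refine ⟨u, huK.2, fun w hw => ?_⟩
  by_cases hwR : ‖w‖ ≤ R
  · exact hu ⟨by simpa using hwR, hw⟩
  · push Not at hwR
    refine (hu h0K).trans (hJ0.trans ?_)
    rw [aux_J μ W hμ]
    have e1 := hcoer w hw
    have e2 := aux_log μ h hμ hh w
    have e3 : ρ * Real.log (∑ x, μ x * (h x * Real.exp (w x))) ≤ |ρ| * (B + ‖w‖) := by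
      refine (le_abs_self _).trans ?_
      rw [abs_mul]
      exact mul_le_mul_of_nonneg_left e2 (abs_nonneg _)
    have hw1 : 1 ≤ ‖w‖ := by linarith
    have e4 : c * R * ‖w‖ ≤ c * ‖w‖ ^ 2 := by
      rw [pow_two, mul_assoc]
      exact mul_le_mul_of_nonneg_left (mul_le_mul_of_nonneg_right hwR.le (by linarith)) hc.le
    have e5 : (|ρ| + 2 * (|ρ| * B)) * ‖w‖ ≤ c * R * ‖w‖ :=
      mul_le_mul_of_nonneg_right hcR (by linarith)
    have e6 : |ρ| * B ≤ |ρ| * B * ‖w‖ := le_mul_of_one_le_right hρB hw1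
    nlinarith

lemma aux_EL [Fintype V] [Nonempty V] [DecidableEq V]
    (μ : V → ℝ) (W : V → V → ℝ) (hμ : ∀ x, 0 < μ x) (hWsym : ∀ x y, W x y = W y x)
    (h : V → ℝ) (hh : ∀ x, 0 < h x) (ρ : ℝ) (u : V → ℝ) (hu0 : intV μ u = 0)
    (hu : ∀ w : V → ℝ, intV μ w = 0 → Jrho μ W h ρ u ≤ Jrho μ W h ρ w)
    (v : V → ℝ) (hv : intV μ v = 0) :
    ∑ x, (∑ y, W x y * (u x - u y)) * v x
      - ρ * ((∑ x, μ x * (h x * (Real.exp (u x) * v x))) /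
        ∑ x, μ x * (h x * Real.exp (u x))) = 0 := by
  have hZ : 0 < ∑ x, μ x * (h x * Real.exp (u x)) :=
    Finset.sum_pos (fun x _ => mul_pos (hμ x) (mul_pos (hh x) (Real.exp_pos _)))
      Finset.univ_nonempty
  have hlin : ∀ x, HasDerivAt (fun t : ℝ => u x + t * v x) (v x) 0 := fun x => by
    simpa using ((hasDerivAt_id (0:ℝ)).mul_const (v x)).const_add (u x)
  have hd1 : HasDerivAt (fun t : ℝ => ∑ x, ∑ y, W x y * ((u x + t * v x) - (u y + t * v y)) ^ 2)
      (∑ x, ∑ y, 2 * (W x y * (u x - u y) * (v x - v y))) 0 := by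
    refine HasDerivAt.fun_sum fun x _ => HasDerivAt.fun_sum fun y _ => ?_
    have := ((((hlin x).sub (hlin y)).pow 2).const_mul (W x y))
    refine HasDerivAt.congr_deriv this ?_
    simp
    ring
  have hd2 : HasDerivAt (fun t : ℝ => ∑ x, μ x * (h x * Real.exp (u x + t * v x)))
      (∑ x, μ x * (h x * (Real.exp (u x) * v x))) 0 := by
    refine HasDerivAt.fun_sum fun x _ => ?_
    have := (((hlin x).exp).const_mul (h x)).const_mul (μ x)
    simpa using this
  have hd3 := hd2.log (by simpa using hZ.ne')
  have hd := (hd1.const_mul (1 / 4)).sub (hd3.const_mul ρ)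
  have hmin : IsLocalMin (fun t : ℝ => Jrho μ W h ρ (fun x => u x + t * v x)) 0 := by
    refine Filter.Eventually.of_forall fun t => ?_
    have := hu (fun x => u x + t * v x) (by
      have : intV μ (fun x => u x + t * v x) = intV μ u + t * intV μ v := by
        unfold intV
        rw [Finset.mul_sum, ← Finset.sum_add_distrib]
        exact Finset.sum_congr rfl fun x _ => by ring
      rw [this, hu0, hv]; simp)
    simpa using this
  have hJ : HasDerivAt (fun t : ℝ => Jrho μ W h ρ (fun x => u x + t * v x)) _ 0 :=
    hd.congr_of_eventuallyEq (Filter.Eventually.of_forall fun t => by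
      simp only [aux_J μ W hμ]; rfl)
  have hz := hmin.hasDerivAt_eq_zero hJ
  simp_rw [← Finset.mul_sum] at hz
  rw [aux_sym W hWsym] at hz
  simp only [zero_mul, add_zero] at hz
  linarith

/-- For positive `h` and `ρ ≠ 0`, `J_ρ` attains its infimum over the mean-zero subspace at some
`u`, and this minimizer solves the fractional mean field equation. -/
theorem Jrho_minimizer_solves [Fintype V] [Nonempty V] [DecidableEq V]
    (μ : V → ℝ) (W : V → V → ℝ)
    (hμ : ∀ x, 0 < μ x)
    (hWsym : ∀ x y, W x y = W y x)
    (hWpos : ∀ x y, x ≠ y → 0 < W x y)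
    (h : V → ℝ) (hh : ∀ x, 0 < h x)
    (ρ : ℝ) (hρ : ρ ≠ 0) :
    ∃ u : V → ℝ, intV μ u = 0 ∧
      (∀ w : V → ℝ, intV μ w = 0 → Jrho μ W h ρ u ≤ Jrho μ W h ρ w) ∧
      (∀ x : V, opL μ W u x =
        ρ * (h x * Real.exp (u x) / intV μ (fun y => h y * Real.exp (u y)) - 1 / volV μ)) := by
  obtain ⟨u, hu0, hu⟩ := aux_exists μ W hμ hWpos h hh ρ
  refine ⟨u, hu0, hu, fun x => ?_⟩
  have hM : 0 < volV μ := Finset.sum_pos (fun x _ => hμ x) Finset.univ_nonempty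
  have hZ : 0 < ∑ x, μ x * (h x * Real.exp (u x)) :=
    Finset.sum_pos (fun x _ => mul_pos (hμ x) (mul_pos (hh x) (Real.exp_pos _)))
      Finset.univ_nonempty
  have hx := hμ x
  have hS : ∑ x, ∑ y, W x y * (u x - u y) = 0 := by
    have := aux_sym W hWsym u (fun _ => 1)
    simp at this
    exact this
  have key := aux_EL μ W hμ hWsym h hh ρ u hu0 hu
    (fun y => (if y = x then 1 / μ x else 0) - 1 / volV μ) (by
      unfold intV
      simp_rw [mul_sub, Finset.sum_sub_distrib, ← Finset.sum_mul]
      have : ∑ y, μ y = volV μ := rfl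
      rw [this]
      simp [hx.ne', hM.ne'])
  have e1 : ∑ z, (∑ y, W z y * (u z - u y)) * ((if z = x then 1 / μ x else 0) - 1 / volV μ)
      = opL μ W u x := by
    simp_rw [mul_sub (∑ y, _), Finset.sum_sub_distrib]
    rw [← Finset.sum_mul, hS]
    simp only [mul_ite, mul_zero, Finset.sum_ite_eq', Finset.mem_univ, if_true, zero_mul, sub_zero]
    rw [← aux_L μ W hμ]
    field_simp
  have e2 : ∑ z, μ z * (h z * (Real.exp (u z) * ((if z = x then 1 / μ x else 0) - 1 / volV μ)))
      = h x * Real.exp (u x) - (∑ z, μ z * (h z * Real.exp (u z))) * (1 / volV μ) := by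
    rw [Finset.sum_mul]
    simp_rw [mul_sub, Finset.sum_sub_distrib]
    congr 1
    · simp only [mul_ite, mul_zero, Finset.sum_ite_eq', Finset.mem_univ, if_true]
      field_simp
    · exact Finset.sum_congr rfl fun z _ => by ring
  rw [e1, e2, sub_div, mul_div_right_comm (∑ z, _), div_self hZ.ne', one_mul] at key
  unfold intV
  linarith
end

section
/- Let h : V → ℝ satisfy h ≥ 0 and h ≢ 0, and let ρ ∈ ℝ with ρ ≠ 0. Then there exists at least one function u : V → ℝ with ∫_V h e^u dμ = 1 solving the fractional mean field equation Lu(x) = ρ( h(x)e^{u(x)} / ∫_V h e^u dμ − 1/|V| ) for every x ∈ V; equivalently, Lu = ρ h e^u − ρ/|V| on V. -/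
open Real Finset

variable {V : Type*}

/-- Regularised energy functional. -/
noncomputable def Jfun [Fintype V] (μ : V → ℝ) (W : V → V → ℝ) (h : V → ℝ) (ρ : ℝ) (x0 : V)
    (u : V → ℝ) : ℝ :=
  (1/4) * ∑ x, ∑ y, W x y * (u x - u y)^2 + (1/2) * (u x0)^2
    + ρ / (∑ x, μ x) * ∑ x, μ x * u x - ρ * Real.log (∑ x, μ x * (h x * Real.exp (u x)))

theorem I_pos [Fintype V] (μ : V → ℝ) (hμ : ∀ x, 0 < μ x)
    (h : V → ℝ) (hh : ∀ x, 0 ≤ h x) (hne : ∃ x, h x ≠ 0) (u : V → ℝ) :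
    0 < ∑ x, μ x * (h x * Real.exp (u x)) := by
  obtain ⟨z, hz⟩ := hne
  have hz' : 0 < h z := lt_of_le_of_ne (hh z) (Ne.symm hz)
  apply Finset.sum_pos'
  · intro x _
    exact mul_nonneg (hμ x).le (mul_nonneg (hh x) (Real.exp_pos _).le)
  · exact ⟨z, Finset.mem_univ _, mul_pos (hμ z) (mul_pos hz' (Real.exp_pos _))⟩

theorem J_cont [Fintype V] (μ : V → ℝ) (W : V → V → ℝ) (hμ : ∀ x, 0 < μ x)
    (h : V → ℝ) (hh : ∀ x, 0 ≤ h x) (hne : ∃ x, h x ≠ 0) (ρ : ℝ) (x0 : V) :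
    Continuous (Jfun μ W h ρ x0) := by
  unfold Jfun
  have h1 : Continuous fun u : V → ℝ => Real.log (∑ x, μ x * (h x * Real.exp (u x))) := by
    apply Continuous.log
    · fun_prop
    · intro u
      exact (I_pos μ hμ h hh hne u).ne'
  fun_prop

theorem J_lower [Fintype V] [Nonempty V] [DecidableEq V] (μ : V → ℝ) (W : V → V → ℝ)
    (hμ : ∀ x, 0 < μ x) (hWpos : ∀ x y, x ≠ y → 0 < W x y)
    (h : V → ℝ) (hh : ∀ x, 0 ≤ h x) (hne : ∃ x, h x ≠ 0) (ρ : ℝ) (x0 : V) :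
    ∃ c > 0, ∃ C, ∀ u : V → ℝ, c * ‖u‖^2 - 2 * |ρ| * ‖u‖ - C ≤ Jfun μ W h ρ x0 u := by
  obtain ⟨z, hz⟩ := Finite.exists_min (fun y => if y = x0 then (1:ℝ) else W x0 y)
  set c0 : ℝ := if z = x0 then (1:ℝ) else W x0 z with hc0
  have hc0pos : 0 < c0 := by
    rw [hc0]; split_ifs with hzx
    · norm_num
    · exact hWpos _ _ (Ne.symm hzx)
  have hc1 : c0 ≤ 1 := by simpa using hz x0
  set H : ℝ := ∑ x, μ x * h x with hH
  have hHpos : 0 < H := by simpa using I_pos μ hμ h hh hne 0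
  refine ⟨c0 / 8, by positivity, |ρ| * |Real.log H|, fun u => ?_⟩
  set M := ‖u‖ with hM
  have hM0 : 0 ≤ M := norm_nonneg u
  have hb : ∀ x, |u x| ≤ M := fun x => norm_le_pi_norm u x
  have hmu : 0 < ∑ x, μ x := Finset.sum_pos (fun x _ => hμ x) Finset.univ_nonempty
  -- linear term
  have hlin : |(∑ x, μ x * u x) / (∑ x, μ x)| ≤ M := by
    rw [abs_div, abs_of_pos hmu, div_le_iff₀ hmu]
    refine (Finset.abs_sum_le_sum_abs _ _).trans ?_
    rw [Finset.mul_sum]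
    refine Finset.sum_le_sum fun x _ => ?_
    rw [abs_mul, abs_of_pos (hμ x), mul_comm]
    exact mul_le_mul_of_nonneg_right (hb x) (hμ x).le
  have hI := I_pos μ hμ h hh hne u
  set I := ∑ x, μ x * (h x * Real.exp (u x)) with hIdef
  have hIu : I ≤ H * Real.exp M := by
    rw [hH, Finset.sum_mul]
    refine Finset.sum_le_sum fun x _ => ?_
    rw [← mul_assoc]
    exact mul_le_mul_of_nonneg_left (Real.exp_le_exp.2 (le_of_abs_le (hb x)))
      (mul_nonneg (hμ x).le (hh x))
  have hIl : H * Real.exp (-M) ≤ I := by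
    rw [hH, Finset.sum_mul]
    refine Finset.sum_le_sum fun x _ => ?_
    rw [← mul_assoc]
    exact mul_le_mul_of_nonneg_left (Real.exp_le_exp.2 (neg_le_of_abs_le (hb x)))
      (mul_nonneg (hμ x).le (hh x))
  have hlog : |Real.log I| ≤ M + |Real.log H| := by
    have h1 := Real.log_le_log hI hIu
    have h2 := Real.log_le_log (by positivity) hIl
    rw [Real.log_mul hHpos.ne' (Real.exp_pos _).ne', Real.log_exp] at h1 h2
    rw [abs_le]
    constructor
    · linarith [neg_abs_le (Real.log H)]
    · linarith [le_abs_self (Real.log H)]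
  -- quadratic term
  obtain ⟨y, hy⟩ := Finite.exists_max (fun x => |u x|)
  have hMy : M ≤ |u y| := (pi_norm_le_iff_of_nonneg (abs_nonneg _)).2 hy
  have hnn : ∀ a b, 0 ≤ W a b * (u a - u b)^2 := by
    intro a b
    by_cases hab : a = b
    · subst hab; simp
    · exact mul_nonneg (hWpos a b hab).le (sq_nonneg _)
  have hq : c0 * (u x0 - u y)^2 ≤ ∑ a, ∑ b, W a b * (u a - u b)^2 := by
    have h1 : W x0 y * (u x0 - u y)^2 ≤ ∑ b, W x0 b * (u x0 - u b)^2 :=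
      Finset.single_le_sum (f := fun b => W x0 b * (u x0 - u b)^2)
        (fun b _ => hnn x0 b) (Finset.mem_univ y)
    have h2 : ∑ b, W x0 b * (u x0 - u b)^2 ≤ ∑ a, ∑ b, W a b * (u a - u b)^2 :=
      Finset.single_le_sum (f := fun a => ∑ b, W a b * (u a - u b)^2)
        (fun a _ => Finset.sum_nonneg fun b _ => hnn a b) (Finset.mem_univ x0)
    refine le_trans ?_ (h1.trans h2)
    by_cases hyx : y = x0
    · subst hyx; simp
    · have := hz y
      rw [if_neg hyx] at this
      exact mul_le_mul_of_nonneg_right this (sq_nonneg _)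
  have hMsq : M^2 ≤ 2 * (u x0)^2 + 2 * (u x0 - u y)^2 := by
    have h1 : M^2 ≤ (u y)^2 := by
      rw [← sq_abs (u y)]
      exact pow_le_pow_left₀ hM0 hMy 2
    nlinarith [sq_nonneg (2 * u x0 - u y)]
  have hl1 : -(|ρ| * M) ≤ ρ / (∑ x, μ x) * ∑ x, μ x * u x := by
    have : ρ / (∑ x, μ x) * ∑ x, μ x * u x = ρ * ((∑ x, μ x * u x) / (∑ x, μ x)) := by ring
    rw [this]
    have h2 := neg_abs_le (ρ * ((∑ x, μ x * u x) / (∑ x, μ x)))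
    rw [abs_mul] at h2
    have := mul_le_mul_of_nonneg_left hlin (abs_nonneg ρ)
    linarith
  have hl2 : ρ * Real.log I ≤ |ρ| * (M + |Real.log H|) := by
    refine (le_abs_self _).trans ?_
    rw [abs_mul]
    exact mul_le_mul_of_nonneg_left hlog (abs_nonneg ρ)
  have hx0 : c0 * (u x0)^2 ≤ (u x0)^2 := by nlinarith [sq_nonneg (u x0)]
  have hc := mul_le_mul_of_nonneg_left hMsq hc0pos.le
  unfold Jfun
  rw [← hIdef]
  nlinarith [sq_nonneg (u x0)]

theorem J_min [Fintype V] [Nonempty V] [DecidableEq V] (μ : V → ℝ) (W : V → V → ℝ)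
    (hμ : ∀ x, 0 < μ x) (hWpos : ∀ x y, x ≠ y → 0 < W x y)
    (h : V → ℝ) (hh : ∀ x, 0 ≤ h x) (hne : ∃ x, h x ≠ 0) (ρ : ℝ) (x0 : V) :
    ∃ u, ∀ v, Jfun μ W h ρ x0 u ≤ Jfun μ W h ρ x0 v := by
  obtain ⟨c, hc, C, hJ⟩ := J_lower μ W hμ hWpos h hh hne ρ x0
  apply (J_cont μ W hμ h hh hne ρ x0).exists_forall_le
  refine Filter.tendsto_atTop_mono (f := fun u : V → ℝ => ‖u‖ - ((2*|ρ|+1)^2/(4*c) + C)) ?_ ?_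
  · intro u
    refine le_trans ?_ (hJ u)
    have h1 : (2*|ρ|+1) * ‖u‖ ≤ c * ‖u‖^2 + (2*|ρ|+1)^2/(4*c) := by
      have : c * ‖u‖^2 + (2*|ρ|+1)^2/(4*c) - (2*|ρ|+1) * ‖u‖
          = (2 * c * ‖u‖ - (2*|ρ|+1))^2/(4*c) := by
        field_simp; ring
      have h3 : 0 ≤ (2 * c * ‖u‖ - (2*|ρ|+1))^2/(4*c) := by positivity
      linarith
    linarith
  · exact Filter.tendsto_atTop_add_const_right _ _ (tendsto_norm_cocompact_atTop (E := V → ℝ))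

theorem J_weak [Fintype V] (μ : V → ℝ) (W : V → V → ℝ)
    (hμ : ∀ x, 0 < μ x)
    (h : V → ℝ) (hh : ∀ x, 0 ≤ h x) (hne : ∃ x, h x ≠ 0) (ρ : ℝ) (x0 : V) (u : V → ℝ)
    (hu : ∀ v, Jfun μ W h ρ x0 u ≤ Jfun μ W h ρ x0 v) (v : V → ℝ) :
    (1/2) * ∑ x, ∑ y, W x y * ((u x - u y) * (v x - v y)) + u x0 * v x0
      + ρ / (∑ x, μ x) * ∑ x, μ x * v x
      - ρ * ((∑ x, μ x * (h x * (Real.exp (u x) * v x))) / ∑ x, μ x * (h x * Real.exp (u x)))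
      = 0 := by
  have hl : ∀ x, HasDerivAt (fun t : ℝ => u x + t * v x) (v x) 0 := by
    intro x
    simpa using ((hasDerivAt_id (0:ℝ)).mul_const (v x)).const_add (u x)
  have h1 : HasDerivAt (fun t : ℝ => ∑ x, ∑ y, W x y * ((u x + t * v x) - (u y + t * v y))^2)
      (∑ x, ∑ y, W x y * (2 * (u x - u y) * (v x - v y))) 0 := by
    refine HasDerivAt.fun_sum fun x _ => HasDerivAt.fun_sum fun y _ => ?_
    simpa using (((hl x).fun_sub (hl y)).fun_pow 2).const_mul (W x y)
  have h2 : HasDerivAt (fun t : ℝ => (u x0 + t * v x0)^2) (2 * u x0 * v x0) 0 := by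
    simpa using (hl x0).fun_pow 2
  have h3 : HasDerivAt (fun t : ℝ => ∑ x, μ x * (u x + t * v x)) (∑ x, μ x * v x) 0 :=
    HasDerivAt.fun_sum fun x _ => (hl x).const_mul (μ x)
  have h4 : HasDerivAt (fun t : ℝ => ∑ x, μ x * (h x * Real.exp (u x + t * v x)))
      (∑ x, μ x * (h x * (Real.exp (u x) * v x))) 0 := by
    refine HasDerivAt.fun_sum fun x _ => ?_
    simpa using (((hl x).exp).const_mul (h x)).const_mul (μ x)
  have h5 := h4.log (by simpa using (I_pos μ hμ h hh hne u).ne')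
  have hd := (((h1.const_mul (1/4)).fun_add (h2.const_mul (1/2))).fun_add
    (h3.const_mul (ρ / (∑ x, μ x)))).fun_sub (h5.const_mul ρ)
  have hmin : IsLocalMin (fun t : ℝ => Jfun μ W h ρ x0 (fun x => u x + t * v x)) 0 := by
    refine Filter.Eventually.of_forall fun t => ?_
    simpa using hu (fun x => u x + t * v x)
  have h0 := hmin.hasDerivAt_eq_zero hd
  simp only [zero_mul, add_zero] at h0
  rw [← h0]
  have e : ∑ x, ∑ y, W x y * (2 * (u x - u y) * (v x - v y))
      = 2 * ∑ x, ∑ y, W x y * ((u x - u y) * (v x - v y)) := by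
    simp only [Finset.mul_sum]
    exact Finset.sum_congr rfl fun x _ => Finset.sum_congr rfl fun y _ => by ring
  rw [e]; ring

theorem form_eq [Fintype V] (W : V → V → ℝ) (hWsym : ∀ x y, W x y = W y x) (u v : V → ℝ) :
    (1/2) * ∑ x, ∑ y, W x y * ((u x - u y) * (v x - v y))
      = ∑ x, v x * ∑ y, W x y * (u x - u y) := by
  have e1 : ∑ x, ∑ y, W x y * ((u x - u y) * (v x - v y))
      = ∑ x, ∑ y, v x * (W x y * (u x - u y)) + ∑ x, ∑ y, v y * (W y x * (u y - u x)) := by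
    simp only [← Finset.sum_add_distrib]
    refine Finset.sum_congr rfl fun x _ => Finset.sum_congr rfl fun y _ => ?_
    rw [hWsym y x]; ring
  rw [e1, Finset.sum_comm (f := fun x y => v y * (W y x * (u y - u x)))]
  simp only [← Finset.mul_sum]
  ring

/-- For `0 ≤ h ≢ 0` and `ρ ≠ 0`, the fractional mean field equation has at least one solution
`u` normalized by `∫_V h e^u dμ = 1`. -/
theorem mean_field_nonneg_h [Fintype V] [Nonempty V] [DecidableEq V]
    (μ : V → ℝ) (W : V → V → ℝ)
    (hμ : ∀ x, 0 < μ x)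
    (hWsym : ∀ x y, W x y = W y x)
    (hWpos : ∀ x y, x ≠ y → 0 < W x y)
    (h : V → ℝ) (hh : ∀ x, 0 ≤ h x) (hne : ∃ x, h x ≠ 0)
    (ρ : ℝ) (hρ : ρ ≠ 0) :
    ∃ u : V → ℝ, intV μ (fun x => h x * Real.exp (u x)) = 1 ∧
      ∀ x : V, opL μ W u x =
        ρ * (h x * Real.exp (u x) / intV μ (fun y => h y * Real.exp (u y)) - 1 / volV μ) := by
  classical
  obtain ⟨x0⟩ := ‹Nonempty V›
  haveI : Nonempty V := ⟨x0⟩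
  obtain ⟨u, hu⟩ := J_min μ W hμ hWpos h hh hne ρ x0
  have hw := J_weak μ W hμ h hh hne ρ x0 u hu
  have hI := I_pos μ hμ h hh hne u
  have hmu : 0 < ∑ x, μ x := Finset.sum_pos (fun x _ => hμ x) Finset.univ_nonempty
  set I := ∑ x, μ x * (h x * Real.exp (u x)) with hIdef
  have hu0 : u x0 = 0 := by
    have h1 := hw (fun _ => 1)
    simp only [sub_self, mul_zero, Finset.sum_const_zero, mul_one] at h1
    rw [← hIdef, div_self hI.ne', div_mul_cancel₀ _ hmu.ne'] at h1
    linarith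
  have hInt : intV μ (fun x => h x * Real.exp (u x - Real.log I)) = 1 := by
    unfold intV
    simp only [Real.exp_sub, Real.exp_log hI]
    rw [← div_self hI.ne']
    nth_rewrite 2 [hIdef]
    rw [Finset.sum_div]
    exact Finset.sum_congr rfl fun x _ => by ring
  refine ⟨fun x => u x - Real.log I, hInt, fun x => ?_⟩
  rw [hInt]
  have h1 := hw (Pi.single x 1)
  rw [form_eq W hWsym, hu0] at h1
  simp only [Pi.single_apply, ite_mul, mul_ite, one_mul, zero_mul, mul_one, mul_zero,
    Finset.sum_ite_eq', Finset.mem_univ, if_true, add_zero, ite_self] at h1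
  have e : ∑ y ∈ univ.filter (fun y => y ≠ x),
      W x y * ((u x - Real.log I) - (u y - Real.log I)) = ∑ y, W x y * (u x - u y) := by
    rw [Finset.sum_filter]
    refine Finset.sum_congr rfl fun y _ => ?_
    split_ifs with hyx
    · ring
    · rw [not_not] at hyx
      subst hyx; ring
  unfold opL volV
  rw [e, Real.exp_sub, Real.exp_log hI]
  have hx := (hμ x).ne'
  have e2 : ∑ y, W x y * (u x - u y)
      = ρ * (μ x * (h x * Real.exp (u x)) / I) - ρ / (∑ x, μ x) * μ x := by linarith
  rw [e2]
  field_simp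
end

section
/- (Elliptic estimate) There exists a constant C > 0, depending only on (V, μ, W), such that for every u : V → ℝ one has max_{x∈V} u(x) − min_{x∈V} u(x) ≤ C · max_{x∈V} |Lu(x)|. -/
open Real Finset

variable {V : Type*}

/-- (Elliptic estimate) There exists `C > 0` such that for every `u : V → ℝ`,
`max u − min u ≤ C · max |Lu|`. -/
theorem elliptic_estimate [Fintype V] [Nonempty V] [DecidableEq V]
    (μ : V → ℝ) (W : V → V → ℝ)
    (hμ : ∀ x, 0 < μ x)
    (hWsym : ∀ x y, W x y = W y x)
    (hWpos : ∀ x y, x ≠ y → 0 < W x y) :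
    ∃ C : ℝ, 0 < C ∧ ∀ u : V → ℝ,
      univ.sup' univ_nonempty u - univ.inf' univ_nonempty u ≤
        C * univ.sup' univ_nonempty (fun x => |opL μ W u x|) := by
  refine ⟨1 + ∑ x, ∑ y, μ x / |W x y|, ?_, ?_⟩
  · have : 0 ≤ ∑ x, ∑ y, μ x / |W x y| :=
      Finset.sum_nonneg fun x _ => Finset.sum_nonneg fun y _ =>
        div_nonneg (hμ x).le (abs_nonneg _)
    linarith
  · intro u
    obtain ⟨a, -, ha⟩ := Finset.exists_mem_eq_sup' (univ_nonempty (α := V)) u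
    obtain ⟨b, -, hb⟩ := Finset.exists_mem_eq_inf' (univ_nonempty (α := V)) u
    have hmax : ∀ y, u y ≤ u a := fun y => ha ▸ Finset.le_sup' u (mem_univ y)
    have hM : |opL μ W u a| ≤ univ.sup' univ_nonempty (fun x => |opL μ W u x|) :=
      Finset.le_sup' (fun x => |opL μ W u x|) (mem_univ a)
    rw [ha, hb]
    set M := univ.sup' univ_nonempty (fun x => |opL μ W u x|) with hMdef
    have hM0 : 0 ≤ M := (abs_nonneg _).trans hM
    have hnn : ∀ x y, 0 ≤ μ x / |W x y| := fun x y => div_nonneg (hμ x).le (abs_nonneg _)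
    have hC : μ a / |W a b| ≤ 1 + ∑ x, ∑ y, μ x / |W x y| := by
      have h1 : μ a / |W a b| ≤ ∑ y, μ a / |W a y| :=
        Finset.single_le_sum (f := fun y => μ a / |W a y|) (fun y _ => hnn a y) (mem_univ b)
      have h2 : ∑ y, μ a / |W a y| ≤ ∑ x, ∑ y, μ x / |W x y| :=
        Finset.single_le_sum (f := fun x => ∑ y, μ x / |W x y|)
          (fun x _ => Finset.sum_nonneg fun y _ => hnn x y) (mem_univ a)
      linarith
    refine le_trans ?_ (mul_le_mul_of_nonneg_right hC hM0)
    by_cases hab : a = b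
    · subst hab
      rw [sub_self]
      exact mul_nonneg (hnn _ _) hM0
    · have hW := hWpos a b hab
      have hs : W a b * (u a - u b) ≤
          ∑ y ∈ univ.filter (fun y => y ≠ a), W a y * (u a - u y) := by
        refine Finset.single_le_sum (f := fun y => W a y * (u a - u y)) (fun y hy => ?_) ?_
        · have hy' : y ≠ a := (Finset.mem_filter.mp hy).2
          exact mul_nonneg (hWpos a y hy'.symm).le (sub_nonneg.mpr (hmax y))
        · exact Finset.mem_filter.mpr ⟨mem_univ b, fun h => hab h.symm⟩
      have hL : μ a * opL μ W u a =
          ∑ y ∈ univ.filter (fun y => y ≠ a), W a y * (u a - u y) := by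
        unfold opL
        rw [← mul_assoc, mul_one_div_cancel (hμ a).ne', one_mul]
      have hle : μ a * opL μ W u a ≤ μ a * M :=
        mul_le_mul_of_nonneg_left ((le_abs_self _).trans hM) (hμ a).le
      rw [abs_of_pos hW, div_mul_eq_mul_div, le_div_iff₀ hW]
      linarith
end

section
/- (A priori estimate) Let Λ > 0 and let h : V → ℝ satisfy h ≥ 0, h ≢ 0, and Λ^{-1} ≤ h(x) ≤ Λ for every x ∈ V with h(x) ≠ 0. Let ρ ∈ ℝ with ρ ≠ 0 and |ρ| ≤ Λ. Then there exists a constant C, depending only on Λ and (V, μ, W), such that every solution v : V → ℝ of Lv = ρ h e^v − ρ/|V| on V satisfies |v(x)| ≤ C for all x ∈ V. -/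
open Real Finset

variable {V : Type*}

/-- (A priori estimate) Under the stated bounds on `h` and `ρ`, any solution `v` of
`Lv = ρ h e^v − ρ/|V|` satisfies a uniform bound `|v(x)| ≤ C`. -/
theorem apriori_estimate [Fintype V] [Nonempty V] [DecidableEq V]
    (μ : V → ℝ) (W : V → V → ℝ)
    (hμ : ∀ x, 0 < μ x)
    (hWsym : ∀ x y, W x y = W y x)
    (hWpos : ∀ x y, x ≠ y → 0 < W x y)
    (Λ : ℝ) (hΛ : 0 < Λ) :
    ∃ C : ℝ, ∀ (h : V → ℝ) (ρ : ℝ),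
      (∀ x, 0 ≤ h x) → (∃ x, h x ≠ 0) →
      (∀ x, h x ≠ 0 → Λ⁻¹ ≤ h x ∧ h x ≤ Λ) →
      ρ ≠ 0 → |ρ| ≤ Λ →
      ∀ v : V → ℝ,
        (∀ x, opL μ W v x = ρ * h x * Real.exp (v x) - ρ / volV μ) →
        ∀ x, |v x| ≤ C := by
  classical
  have hvol : 0 < volV μ := by
    unfold volV
    exact Finset.sum_pos (fun x _ => hμ x) univ_nonempty
  let D : ℝ := ∑ x, ∑ y, |2 * Λ / W x y|
  refine ⟨D + (∑ z, |Real.log (Λ / μ z)|) + |Real.log (Λ * volV μ)|, ?_⟩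
  intro h ρ h0 hne hb hρ hρΛ v hv
  -- the multiplied equation
  have eq1 : ∀ x, ∑ y, W x y * (v x - v y)
      = ρ * (μ x * h x * Real.exp (v x)) - ρ * (μ x / volV μ) := by
    intro x
    have e := hv x
    unfold opL at e
    have e2 : ∑ y ∈ univ.filter (fun y => y ≠ x), W x y * (v x - v y)
        = ∑ y, W x y * (v x - v y) := by
      apply Finset.sum_subset (Finset.filter_subset _ _)
      intro y _ hy
      have : y = x := by simpa using hy
      simp [this]
    rw [e2] at e
    have hm := (hμ x).ne'
    have e3 : ∑ y, W x y * (v x - v y)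
        = μ x * (1 / μ x * ∑ y, W x y * (v x - v y)) := by
      field_simp
    rw [e3, e]
    ring
  have hsum0 : ∑ x, ∑ y, W x y * (v x - v y) = 0 := by
    have e : ∑ x, ∑ y, W x y * (v x - v y) = -∑ x, ∑ y, W x y * (v x - v y) := by
      conv_lhs => rw [Finset.sum_comm]
      rw [← Finset.sum_neg_distrib]
      refine Finset.sum_congr rfl fun x _ => ?_
      rw [← Finset.sum_neg_distrib]
      refine Finset.sum_congr rfl fun y _ => ?_
      rw [hWsym y x]
      ring
    linarith
  have hone : ∑ x, μ x * h x * Real.exp (v x) = 1 := by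
    rw [Finset.sum_congr rfl (fun x _ => eq1 x), Finset.sum_sub_distrib,
      ← Finset.mul_sum, ← Finset.mul_sum, ← Finset.sum_div] at hsum0
    have e : (∑ x, μ x) / volV μ = 1 := div_self hvol.ne'
    rw [e, ← mul_sub] at hsum0
    rcases mul_eq_zero.1 hsum0 with e | e
    · exact absurd e hρ
    · linarith
  have hnn : ∀ x, 0 ≤ μ x * h x * Real.exp (v x) := fun x =>
    mul_nonneg (mul_nonneg (hμ x).le (h0 x)) (Real.exp_pos _).le
  have hle1 : ∀ x, μ x * h x * Real.exp (v x) ≤ 1 := by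
    intro x
    rw [← hone]
    exact Finset.single_le_sum (f := fun x => μ x * h x * Real.exp (v x))
      (fun y _ => hnn y) (mem_univ x)
  have hle2 : ∀ x, μ x / volV μ ≤ 1 := by
    intro x
    rw [div_le_one hvol]
    exact Finset.single_le_sum (f := μ) (fun y _ => (hμ y).le) (mem_univ x)
  obtain ⟨m, -, hm⟩ := Finset.exists_max_image univ v univ_nonempty
  have hD0 : 0 ≤ D := Finset.sum_nonneg fun x _ => Finset.sum_nonneg fun y _ => abs_nonneg _
  have hosc : ∀ y, v m - v y ≤ D := by
    intro y
    by_cases hy : m = y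
    · subst hy; simpa using hD0
    have hW := hWpos m y hy
    have s1 : W m y * (v m - v y) ≤ ∑ z, W m z * (v m - v z) := by
      refine Finset.single_le_sum (f := fun z => W m z * (v m - v z)) ?_ (mem_univ y)
      intro z _
      by_cases hz : m = z
      · subst hz; simp
      · exact mul_nonneg (hWpos m z hz).le (sub_nonneg.2 (hm z (mem_univ z)))
    have s2 : ∑ z, W m z * (v m - v z) ≤ 2 * Λ := by
      rw [eq1, ← mul_sub]
      have a1 : |μ m * h m * Real.exp (v m) - μ m / volV μ| ≤ 2 := by
        have := hnn m
        have := hle1 m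
        have := hle2 m
        have : 0 ≤ μ m / volV μ := (div_pos (hμ m) hvol).le
        rw [abs_le]
        constructor <;> linarith
      calc _ ≤ |ρ * (μ m * h m * Real.exp (v m) - μ m / volV μ)| := le_abs_self _
        _ = |ρ| * |μ m * h m * Real.exp (v m) - μ m / volV μ| := abs_mul _ _
        _ ≤ Λ * 2 := mul_le_mul hρΛ a1 (abs_nonneg _) hΛ.le
        _ = 2 * Λ := by ring
    have s3 : v m - v y ≤ 2 * Λ / W m y := by
      rw [le_div_iff₀ hW]; linarith
    have s4 : |2 * Λ / W m y| ≤ ∑ z, |2 * Λ / W m z| :=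
      Finset.single_le_sum (f := fun z => |2 * Λ / W m z|) (fun _ _ => abs_nonneg _) (mem_univ y)
    have s5 : ∑ z, |2 * Λ / W m z| ≤ D :=
      Finset.single_le_sum (f := fun x => ∑ z, |2 * Λ / W x z|)
        (fun _ _ => Finset.sum_nonneg fun _ _ => abs_nonneg _) (mem_univ m)
    linarith [le_abs_self (2 * Λ / W m y)]
  -- upper bound
  obtain ⟨z, hz⟩ := hne
  have hup : v z ≤ Real.log (Λ / μ z) := by
    rw [Real.le_log_iff_exp_le (div_pos hΛ (hμ z)), le_div_iff₀ (hμ z)]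
    have a : μ z * Λ⁻¹ * Real.exp (v z) ≤ 1 := by
      refine le_trans ?_ (hle1 z)
      have := (hb z hz).1
      have := (hμ z).le
      gcongr
    calc Real.exp (v z) * μ z = Λ * (μ z * Λ⁻¹ * Real.exp (v z)) := by field_simp
      _ ≤ Λ * 1 := by gcongr
      _ = Λ := mul_one _
  have hlow : -Real.log (Λ * volV μ) ≤ v m := by
    have a : 1 ≤ Λ * volV μ * Real.exp (v m) := by
      rw [← hone, volV, Finset.mul_sum, Finset.sum_mul]
      refine Finset.sum_le_sum fun x _ => ?_
      have b : h x ≤ Λ := by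
        by_cases hx : h x = 0
        · rw [hx]; exact hΛ.le
        · exact (hb x hx).2
      have c : v x ≤ v m := hm x (mem_univ x)
      have d := (hμ x).le
      rw [mul_comm Λ]
      gcongr
    have hp : 0 < Λ * volV μ := mul_pos hΛ hvol
    have := Real.log_nonneg a
    rw [Real.log_mul hp.ne' (Real.exp_pos _).ne', Real.log_exp] at this
    linarith
  have hsz : |Real.log (Λ / μ z)| ≤ ∑ z, |Real.log (Λ / μ z)| :=
    Finset.single_le_sum (f := fun z => |Real.log (Λ / μ z)|) (fun _ _ => abs_nonneg _) (mem_univ z)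
  intro x
  have t1 := hosc x
  have t2 := hosc z
  have t3 := hm x (mem_univ x)
  have t4 := le_abs_self (Real.log (Λ / μ z))
  have t5 := le_abs_self (Real.log (Λ * volV μ))
  have t6 := abs_nonneg (Real.log (Λ / μ z))
  have t7 := abs_nonneg (Real.log (Λ * volV μ))
  rw [abs_le]
  constructor <;> linarith
end

section
/- There exists ε₀ > 0, depending only on (V, μ, W), such that for every ε ∈ (0, ε₀) the constant function v ≡ log(ε/|V|) is the unique solution v : V → ℝ of the equation Lv(x) = e^{v(x)} − ε/|V| for all x ∈ V. -/
open Real Finset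

variable {V : Type*}

/-- There exists `ε₀ > 0` such that for every `ε ∈ (0, ε₀)` the constant function
`log(ε/|V|)` is the unique solution of `Lv = e^v − ε/|V|`. -/
theorem unique_solution_small_eps [Fintype V] [Nonempty V] [DecidableEq V]
    (μ : V → ℝ) (W : V → V → ℝ)
    (hμ : ∀ x, 0 < μ x)
    (hWsym : ∀ x y, W x y = W y x)
    (hWpos : ∀ x y, x ≠ y → 0 < W x y) :
    ∃ ε₀ : ℝ, 0 < ε₀ ∧ ∀ ε : ℝ, 0 < ε → ε < ε₀ →
      ∀ v : V → ℝ,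
        (∀ x, opL μ W v x = Real.exp (v x) - ε / volV μ) ↔
        (∀ x, v x = Real.log (ε / volV μ)) := by
  obtain ⟨p, hp⟩ := Finite.exists_min (fun p : V × V => if p.1 = p.2 then (1:ℝ) else W p.1 p.2)
  have hvol : 0 < volV μ := Finset.sum_pos (fun x _ => hμ x) univ_nonempty
  refine ⟨if p.1 = p.2 then (1:ℝ) else W p.1 p.2, ?_, ?_⟩
  · split_ifs with h
    · exact one_pos
    · exact hWpos _ _ h
  intro ε hε hlt v
  have hq : 0 < ε / volV μ := div_pos hε hvol
  have hL : ∀ x, μ x * opL μ W v x = ∑ y, W x y * (v x - v y) := by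
    intro x
    unfold opL
    rw [← mul_assoc, mul_one_div_cancel (hμ x).ne', one_mul, Finset.sum_filter]
    refine Finset.sum_congr rfl fun y _ => ?_
    by_cases h : y = x
    · simp [h]
    · simp [h]
  constructor
  · intro hv
    have hanti : ∑ x, ∑ y, W x y * (v x - v y) = 0 := by
      have h1 : ∑ x, ∑ y, W x y * (v x - v y) = - ∑ x, ∑ y, W x y * (v x - v y) := by
        conv_lhs => rw [Finset.sum_comm]
        rw [← Finset.sum_neg_distrib]
        refine Finset.sum_congr rfl fun x _ => ?_
        rw [← Finset.sum_neg_distrib]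
        refine Finset.sum_congr rfl fun y _ => ?_
        rw [hWsym y x]; ring
      linarith
    have hsum : ∑ x, μ x * Real.exp (v x) = ε := by
      have h2 : ∑ x, μ x * (Real.exp (v x) - ε / volV μ) = 0 := by
        rw [← hanti]
        exact Finset.sum_congr rfl fun x _ => by rw [← hv x, hL x]
      simp only [mul_sub, Finset.sum_sub_distrib, ← Finset.sum_mul] at h2
      have h3 : (∑ x, μ x) * (ε / volV μ) = ε := mul_div_cancel₀ ε hvol.ne'
      linarith
    obtain ⟨a, ha⟩ := Finite.exists_max v
    obtain ⟨b, hb⟩ := Finite.exists_min v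
    have hexpb : Real.exp (v b) ≤ ε / volV μ := by
      rw [le_div_iff₀ hvol, ← hsum, volV, Finset.mul_sum]
      refine Finset.sum_le_sum fun x _ => ?_
      rw [mul_comm]
      exact mul_le_mul_of_nonneg_left (Real.exp_le_exp.2 (hb x)) (hμ x).le
    have hexpa : μ a * Real.exp (v a) ≤ ε := by
      rw [← hsum]
      exact Finset.single_le_sum (f := fun x => μ x * Real.exp (v x))
        (fun x _ => (mul_pos (hμ x) (Real.exp_pos _)).le) (mem_univ a)
    have hab : v a = v b := by
      by_contra hne
      have hlt' : v b < v a := lt_of_le_of_ne (hb a) (Ne.symm hne)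
      have hne' : a ≠ b := fun h => hne (by rw [h])
      have hW : ε < W a b := by
        have := hp (a, b)
        simp only [hne', if_false] at this
        linarith
      have h4 : W a b * (v a - v b) ≤ μ a * (Real.exp (v a) - ε / volV μ) := by
        rw [← hv a, hL a]
        refine Finset.single_le_sum (f := fun y => W a y * (v a - v y)) (fun y _ => ?_) (mem_univ b)
        by_cases h : a = y
        · simp [h]
        · exact mul_nonneg (hWpos _ _ h).le (sub_nonneg.2 (ha y))
      have h5 : Real.exp (v a) - Real.exp (v b) ≤ Real.exp (v a) * (v a - v b) := by
        have h6 : Real.exp (v b) = Real.exp (v a) * Real.exp (v b - v a) := by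
          rw [← Real.exp_add]; ring_nf
        have h7 := mul_le_mul_of_nonneg_left (Real.add_one_le_exp (v b - v a)) (Real.exp_pos (v a)).le
        rw [← h6] at h7
        linarith
      have hd : 0 < v a - v b := sub_pos.2 hlt'
      have h8 : ε * (v a - v b) < W a b * (v a - v b) := mul_lt_mul_of_pos_right hW hd
      have h9 : μ a * Real.exp (v a) * (v a - v b) ≤ ε * (v a - v b) :=
        mul_le_mul_of_nonneg_right hexpa hd.le
      have h10 : μ a * (Real.exp (v a) - Real.exp (v b)) ≤ μ a * (Real.exp (v a) * (v a - v b)) :=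
        mul_le_mul_of_nonneg_left h5 (hμ a).le
      have h11 : μ a * Real.exp (v b) ≤ μ a * (ε / volV μ) :=
        mul_le_mul_of_nonneg_left hexpb (hμ a).le
      linarith
    have hconst : ∀ x, v x = v a := fun x => le_antisymm (ha x) (hab ▸ hb x)
    intro x
    have h12 : opL μ W v x = 0 := by
      unfold opL
      simp [hconst]
    have h13 : Real.exp (v x) = ε / volV μ := by
      have := hv x
      linarith
    rw [← h13, Real.log_exp]
  · intro hv x
    rw [hv x, Real.exp_log hq, sub_self]
    unfold opL
    simp [hv]
end

section
/- The constant function v ≡ −log|V| is the unique solution v : V → ℝ of the equation Lv(x) = −e^{v(x)} + 1/|V| for all x ∈ V. -/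
open Real Finset

variable {V : Type*}

/-- The constant function `−log|V|` is the unique solution of `Lv = −e^v + 1/|V|`. -/
theorem unique_solution_neg_case [Fintype V] [Nonempty V] [DecidableEq V]
    (μ : V → ℝ) (W : V → V → ℝ)
    (hμ : ∀ x, 0 < μ x)
    (hWsym : ∀ x y, W x y = W y x)
    (hWpos : ∀ x y, x ≠ y → 0 < W x y) :
    ∀ v : V → ℝ,
      (∀ x, opL μ W v x = -Real.exp (v x) + 1 / volV μ) ↔
      (∀ x, v x = -Real.log (volV μ)) := by
  intro v
  have hV : 0 < volV μ := Finset.sum_pos (fun x _ => hμ x) Finset.univ_nonempty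
  have hexp : Real.exp (-Real.log (volV μ)) = 1 / volV μ := by
    rw [Real.exp_neg, Real.exp_log hV, one_div]
  constructor
  · intro h
    obtain ⟨a, ha⟩ := Finite.exists_max v
    obtain ⟨b, hb⟩ := Finite.exists_min v
    have h1 : 0 ≤ opL μ W v a := by
      unfold opL
      apply mul_nonneg (one_div_nonneg.mpr (hμ a).le)
      apply Finset.sum_nonneg
      intro y hy
      have hy' : y ≠ a := (Finset.mem_filter.mp hy).2
      exact mul_nonneg (hWpos a y hy'.symm).le (sub_nonneg.mpr (ha y))
    have h2 : opL μ W v b ≤ 0 := by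
      unfold opL
      apply mul_nonpos_of_nonneg_of_nonpos (one_div_nonneg.mpr (hμ b).le)
      apply Finset.sum_nonpos
      intro y hy
      have hy' : y ≠ b := (Finset.mem_filter.mp hy).2
      exact mul_nonpos_of_nonneg_of_nonpos (hWpos b y hy'.symm).le (sub_nonpos.mpr (hb y))
    rw [h a, ← hexp] at h1
    rw [h b, ← hexp] at h2
    have h3 : v a ≤ -Real.log (volV μ) := Real.exp_le_exp.mp (by linarith)
    have h4 : -Real.log (volV μ) ≤ v b := Real.exp_le_exp.mp (by linarith)
    intro x
    exact le_antisymm ((ha x).trans h3) (h4.trans (hb x))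
  · intro h x
    have h0 : opL μ W v x = 0 := by
      unfold opL
      simp [h]
    rw [h0, h x, hexp]
    ring
end

section
/- (Short time existence for the first flow) Let ρ > 0 and let h : V → ℝ satisfy max_{x∈V} h(x) > 0. For any initial function u₀ : V → ℝ with ∫_V h e^{u₀} dμ ≠ 0, there exist T₀ > 0 and a unique function u : V × [0, T₀] → ℝ, differentiable in t, with ∫_V h e^{u(·,t)} dμ ≠ 0 for all t ∈ [0, T₀], such that ∂_t e^{u(x,t)} = −Lu(x,t) + ρ( h(x)e^{u(x,t)} / ∫_V h e^{u(·,t)} dμ − 1/|V| ) for all (x,t) ∈ V × [0, T₀] and u(x,0) = u₀(x) for all x ∈ V. -/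
open Real Finset

variable {V : Type*}

open Set Filter Topology in
/-- Uniqueness for an autonomous ODE with locally Lipschitz right-hand side. -/
lemma ode_unique_aux {E : Type*} [NormedAddCommGroup E] [NormedSpace ℝ E] {F : E → E} {T : ℝ}
    {f g : ℝ → E}
    (hF : ∀ t ∈ Icc (0 : ℝ) T, ContDiffAt ℝ 1 F (f t))
    (hf : ∀ t ∈ Icc (0 : ℝ) T, HasDerivAt f (F (f t)) t)
    (hg : ∀ t ∈ Icc (0 : ℝ) T, HasDerivAt g (F (g t)) t)
    (h0 : g 0 = f 0) : ∀ t ∈ Icc (0 : ℝ) T, g t = f t := by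
  have hfc : ContinuousOn f (Icc 0 T) := fun t ht => (hf t ht).continuousAt.continuousWithinAt
  have hgc : ContinuousOn g (Icc 0 T) := fun t ht => (hg t ht).continuousAt.continuousWithinAt
  have hcl : IsClosed ({t | g t = f t} ∩ Icc 0 T) := by
    have := (hgc.prodMk hfc).preimage_isClosed_of_isClosed isClosed_Icc isClosed_diagonal
    convert this using 1
    ext t
    simp [and_comm]
  refine fun t ht => hcl.Icc_subset_of_forall_mem_nhdsWithin (s := {t | g t = f t}) h0 ?_ ht
  rintro x ⟨hx, hxT⟩
  have hx : g x = f x := hx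
  have hxI : x ∈ Icc (0 : ℝ) T := Ico_subset_Icc_self hxT
  obtain ⟨K, s, hs, hK⟩ := (hF x hxI).exists_lipschitzOnWith
  have h1 : ∀ᶠ t in 𝓝 x, f t ∈ s := (hf x hxI).continuousAt hs
  have h2 : ∀ᶠ t in 𝓝 x, g t ∈ s := (hg x hxI).continuousAt (by rw [hx]; exact hs)
  obtain ⟨δ, hδ, hb⟩ := Metric.eventually_nhds_iff_ball.1 (h1.and h2)
  set b := min (x + δ / 2) T with hbdef
  have hxb : x < b := lt_min (by linarith) hxT.2
  have hsub : ∀ t ∈ Icc x b, t ∈ Icc (0 : ℝ) T := fun t ht =>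
    ⟨hxT.1.trans ht.1, ht.2.trans (min_le_right _ _)⟩
  have hsb : ∀ t ∈ Icc x b, f t ∈ s ∧ g t ∈ s := fun t ht => hb t (by
    have := ht.2.trans (min_le_left _ _)
    have := ht.1
    rw [Metric.mem_ball, Real.dist_eq, abs_of_nonneg] <;> linarith)
  have key : EqOn g f (Icc x b) :=
    ODE_solution_unique_of_mem_Icc_right (v := fun _ => F) (s := fun _ => s) (K := K)
      (fun t _ => hK)
      (hgc.mono hsub) (fun t ht => (hg t (hsub t (Ico_subset_Icc_self ht))).hasDerivWithinAt)
      (fun t ht => (hsb t (Ico_subset_Icc_self ht)).2)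
      (hfc.mono hsub) (fun t ht => (hf t (hsub t (Ico_subset_Icc_self ht))).hasDerivWithinAt)
      (fun t ht => (hsb t (Ico_subset_Icc_self ht)).1) hx
  exact mem_of_superset (Ioc_mem_nhdsGT hxb) (fun t ht => key (Ioc_subset_Icc_self ht))

/-- (Short time existence for the first flow) For `ρ > 0`, `max h > 0` and initial datum `u₀`
with `∫_V h e^{u₀} dμ ≠ 0`, the first mean field flow has a unique solution on some
time interval `[0, T₀]`. -/
theorem first_flow_short_time [Fintype V] [Nonempty V] [DecidableEq V]
    (μ : V → ℝ) (W : V → V → ℝ)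
    (hμ : ∀ x, 0 < μ x)
    (hWsym : ∀ x y, W x y = W y x)
    (hWpos : ∀ x y, x ≠ y → 0 < W x y)
    (ρ : ℝ) (hρ : 0 < ρ)
    (h : V → ℝ) (hmax : ∃ x, 0 < h x)
    (u₀ : V → ℝ) (hu₀ : intV μ (fun x => h x * Real.exp (u₀ x)) ≠ 0) :
    ∃ T₀ : ℝ, 0 < T₀ ∧ ∃ u : ℝ → V → ℝ,
      (u 0 = u₀) ∧
      (∀ t ∈ Set.Icc (0 : ℝ) T₀, intV μ (fun y => h y * Real.exp (u t y)) ≠ 0) ∧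
      (∀ x, ∀ t ∈ Set.Icc (0 : ℝ) T₀,
        HasDerivAt (fun s => Real.exp (u s x))
          (-(opL μ W (u t) x) +
            ρ * (h x * Real.exp (u t x) / intV μ (fun y => h y * Real.exp (u t y)) - 1 / volV μ))
          t) ∧
      (∀ v : ℝ → V → ℝ, v 0 = u₀ →
        (∀ t ∈ Set.Icc (0 : ℝ) T₀, intV μ (fun y => h y * Real.exp (v t y)) ≠ 0) →
        (∀ x, ∀ t ∈ Set.Icc (0 : ℝ) T₀,
          HasDerivAt (fun s => Real.exp (v s x))
            (-(opL μ W (v t) x) +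
              ρ * (h x * Real.exp (v t x) / intV μ (fun y => h y * Real.exp (v t y)) - 1 / volV μ))
            t) →
        ∀ t ∈ Set.Icc (0 : ℝ) T₀, v t = u t) := by
  set G : (V → ℝ) → V → ℝ := fun w x => -(opL μ W w x) +
      ρ * (h x * Real.exp (w x) / intV μ (fun y => h y * Real.exp (w y)) - 1 / volV μ) with hG
  set F : (V → ℝ) → V → ℝ := fun w x => Real.exp (-(w x)) * G w x with hFdef
  have hI : ContDiff ℝ 1 (fun w : V → ℝ => intV μ (fun y => h y * Real.exp (w y))) := by
    unfold intV
    fun_prop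
  have hF : ∀ w : V → ℝ, intV μ (fun y => h y * Real.exp (w y)) ≠ 0 → ContDiffAt ℝ 1 F w := by
    intro w hw
    rw [contDiffAt_pi]
    intro x
    have hL : ContDiff ℝ 1 (fun w : V → ℝ => opL μ W w x) := by
      unfold opL
      fun_prop
    have hq : ContDiffAt ℝ 1 (fun w : V → ℝ =>
        h x * Real.exp (w x) / intV μ (fun y => h y * Real.exp (w y))) w :=
      ContDiffAt.div (by fun_prop) hI.contDiffAt hw
    have he : ContDiff ℝ 1 (fun w : V → ℝ => Real.exp (-(w x))) := by fun_prop
    exact he.contDiffAt.mul (hL.contDiffAt.neg.add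
      (contDiffAt_const.mul (hq.sub contDiffAt_const)))
  have hiff : ∀ (v : ℝ → V → ℝ) (t : ℝ),
      (∀ x, HasDerivAt (fun s => Real.exp (v s x)) (G (v t) x) t) ↔
        HasDerivAt v (F (v t)) t := by
    intro v t
    rw [hasDerivAt_pi]
    refine forall_congr' fun x => ⟨fun H => ?_, fun H => ?_⟩
    · have := H.log (Real.exp_pos _).ne'
      simp only [Real.log_exp] at this
      refine this.congr_deriv ?_
      change _ = Real.exp (-(v t x)) * G (v t) x
      rw [Real.exp_neg, div_eq_inv_mul]
    · refine H.exp.congr_deriv ?_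
      change Real.exp (v t x) * (Real.exp (-(v t x)) * G (v t) x) = _
      rw [← mul_assoc, ← Real.exp_add, add_neg_cancel, Real.exp_zero, one_mul]
  obtain ⟨u, hu0, ε, hε, hu⟩ :=
    (hF u₀ hu₀).exists_forall_mem_closedBall_exists_eq_forall_mem_Ioo_hasDerivAt₀ (0 : ℝ)
  have hne : ∀ᶠ t in nhds (0 : ℝ), intV μ (fun y => h y * Real.exp (u t y)) ≠ 0 := by
    have hc : ContinuousAt u 0 := (hu 0 (by constructor <;> linarith)).continuousAt
    have h2 : ContinuousAt (fun t => intV μ (fun y => h y * Real.exp (u t y))) 0 :=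
      ContinuousAt.comp (f := u)
        (g := fun w : V → ℝ => intV μ (fun y => h y * Real.exp (w y)))
        hI.continuous.continuousAt hc
    exact h2.eventually_ne (by simpa only [hu0] using hu₀)
  obtain ⟨δ, hδ, hb⟩ := Metric.eventually_nhds_iff_ball.1 hne
  have hT : 0 < min ε δ / 2 := by positivity
  have hTε : min ε δ / 2 < ε := by have := min_le_left ε δ; linarith
  have hTδ : min ε δ / 2 < δ := by have := min_le_right ε δ; linarith
  have hne' : ∀ t ∈ Set.Icc (0 : ℝ) (min ε δ / 2),
      intV μ (fun y => h y * Real.exp (u t y)) ≠ 0 := fun t ht => hb t (by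
    rw [Metric.mem_ball, Real.dist_eq, sub_zero, abs_of_nonneg ht.1]
    exact ht.2.trans_lt hTδ)
  have hu' : ∀ t ∈ Set.Icc (0 : ℝ) (min ε δ / 2), HasDerivAt u (F (u t)) t := fun t ht =>
    hu t ⟨by linarith [ht.1], by linarith [ht.2]⟩
  refine ⟨min ε δ / 2, hT, u, hu0, hne', fun x t ht => (hiff u t).2 (hu' t ht) x, ?_⟩
  intro v hv0 _ hv
  exact ode_unique_aux (fun t ht => hF _ (hne' t ht)) hu'
    (fun t ht => (hiff v t).1 fun x => hv x t ht) (hv0.trans hu0.symm)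
end
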